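/- Let α, β, γ ∈ ℝ. The quadratic form A ↦ ⟨C₂(A), A⟩ on 3×3 real matrices is positive definite (i.e. ⟨C₂(A), A⟩ > 0 for all A ≠ 0) if and only if γ + β > 0, γ − β > 0, and 3α + γ + β > 0. -/

import Mathlib

open Matrix

noncomputable section

/-- Vectors in ℝ³. -/
abbrev V3 := Fin 3 → ℝ
/-- 3×3 real matrices. -/
abbrev M3 := Matrix (Fin 3) (Fin 3) ℝ

/-- Euclidean inner product on ℝ³. -/
def dot3 (u v : V3) : ℝ := ∑ i, u i * v i

/-- Frobenius inner product ⟨A,B⟩ = tr(AᵀB). -/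
def frobInner (A B : M3) : ℝ := Matrix.trace (Aᵀ * B)

/-- Symmetric part of a matrix. -/
def symPart (A : M3) : M3 := (1/2 : ℝ) • (A + Aᵀ)

/-- Skew-symmetric part of a matrix. -/
def skwPart (A : M3) : M3 := (1/2 : ℝ) • (A - Aᵀ)

/-- mskw : ℝ³ → ℝ^{3×3}. -/
def mskw (u : V3) : M3 :=
  !![0, -u 2, u 1; u 2, 0, -u 0; -u 1, u 0, 0]

/-- vskw : ℝ^{3×3} → ℝ³. -/
def vskw (A : M3) : V3 :=
  ![(A 2 1 - A 1 2)/2, (A 0 2 - A 2 0)/2, (A 1 0 - A 0 1)/2]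

/-- Partial derivative ∂ⱼ f (Fréchet derivative in the j-th coordinate direction). -/
def pd (j : Fin 3) (f : V3 → ℝ) (x : V3) : ℝ := fderiv ℝ f x (Pi.single j 1)

/-- Jacobian matrix (grad v)ᵢⱼ = ∂ⱼ vᵢ of a vector field. -/
def vgrad (v : V3 → V3) (x : V3) : M3 :=
  Matrix.of fun i j => pd j (fun y => v y i) x

/-- Divergence of a vector field. -/
def vdiv (v : V3 → V3) (x : V3) : ℝ :=
  pd 0 (fun y => v y 0) x + pd 1 (fun y => v y 1) x + pd 2 (fun y => v y 2) x

/-- Curl of a vector field. -/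
def vcurl (v : V3 → V3) (x : V3) : V3 :=
  ![pd 1 (fun y => v y 2) x - pd 2 (fun y => v y 1) x,
    pd 2 (fun y => v y 0) x - pd 0 (fun y => v y 2) x,
    pd 0 (fun y => v y 1) x - pd 1 (fun y => v y 0) x]

/-- Row-wise curl of a matrix field. -/
def mcurl (M : V3 → M3) (x : V3) : M3 :=
  Matrix.of fun i j => vcurl (fun y => M y i) x j

/-- Row-wise divergence of a matrix field. -/
def mdiv (M : V3 → M3) (x : V3) : V3 :=
  fun i => vdiv (fun y => M y i) x

/-- The algebraic operator 𝒮(A) = Aᵀ − (tr A)·I. -/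
def Sop (A : M3) : M3 := Aᵀ - (Matrix.trace A) • (1 : M3)

/-- The inverse 𝒮⁻¹(B) = Bᵀ − ½(tr B)·I. -/
def Sinv (B : M3) : M3 := Bᵀ - ((1/2 : ℝ) * Matrix.trace B) • (1 : M3)

/-- Cosserat material law C₁(ε) = 2μ sym ε + λ(tr ε)I + μ_c skw ε. -/
def C1 (μ lam μc : ℝ) (ε : M3) : M3 :=
  (2*μ) • symPart ε + (lam * Matrix.trace ε) • (1 : M3) + μc • skwPart ε

/-- Elasticity tensor 𝒞(ε) = 2μ sym ε + λ(tr ε)I. -/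
def Cel (μ lam : ℝ) (ε : M3) : M3 :=
  (2*μ) • symPart ε + (lam * Matrix.trace ε) • (1 : M3)

/-- Curvature material law C₂(ε) = (γ+β) sym ε + α(tr ε)I + (γ−β) skw ε. -/
def C2mat (α β γ : ℝ) (ε : M3) : M3 :=
  (γ+β) • symPart ε + (α * Matrix.trace ε) • (1 : M3) + (γ-β) • skwPart ε

theorem quad_formula (α β γ : ℝ) (A : M3) : frobInner (C2mat α β γ A) A =
    (γ + β) * (((A 0 1 + A 1 0)^2 + (A 0 2 + A 2 0)^2 + (A 1 2 + A 2 1)^2) / 2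
      + ((A 0 0 - A 1 1)^2 + (A 1 1 - A 2 2)^2 + (A 0 0 - A 2 2)^2) / 3)
    + (γ - β) * (((A 0 1 - A 1 0)^2 + (A 0 2 - A 2 0)^2 + (A 1 2 - A 2 1)^2) / 2)
    + (3*α + γ + β) * ((A 0 0 + A 1 1 + A 2 2)^2 / 3) := by
  simp [frobInner, C2mat, symPart, skwPart, Matrix.trace, Matrix.mul_apply, Fin.sum_univ_three,
    Matrix.one_apply]
  ring

/-- The quadratic form A ↦ ⟨C₂(A),A⟩ is positive definite
iff γ + β > 0, γ − β > 0, and 3α + γ + β > 0. -/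
theorem stmt13 (α β γ : ℝ) :
    (∀ A : M3, A ≠ 0 → 0 < frobInner (C2mat α β γ A) A) ↔
      (0 < γ + β ∧ 0 < γ - β ∧ 0 < 3*α + γ + β) := by
  constructor
  · intro h
    have h1 := h !![0, 1, 0; 1, 0, 0; 0, 0, 0] (fun e => by
      have := congrFun (congrFun e 0) 1
      simp at this)
    have h2 := h !![0, 1, 0; -1, 0, 0; 0, 0, 0] (fun e => by
      have := congrFun (congrFun e 0) 1
      simp at this)
    have h3 := h !![1, 0, 0; 0, 1, 0; 0, 0, 1] (fun e => by
      have := congrFun (congrFun e 0) 0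
      simp at this)
    rw [quad_formula] at h1 h2 h3
    simp at h1 h2 h3
    refine ⟨?_, ?_, ?_⟩ <;> linarith
  · rintro ⟨hp, hq, ht⟩ A hA
    rw [quad_formula]
    by_contra hn
    apply hA
    set S := ((A 0 1 + A 1 0)^2 + (A 0 2 + A 2 0)^2 + (A 1 2 + A 2 1)^2) / 2
      + ((A 0 0 - A 1 1)^2 + (A 1 1 - A 2 2)^2 + (A 0 0 - A 2 2)^2) / 3 with hS
    set K := ((A 0 1 - A 1 0)^2 + (A 0 2 - A 2 0)^2 + (A 1 2 - A 2 1)^2) / 2 with hK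
    set T := (A 0 0 + A 1 1 + A 2 2)^2 / 3 with hT
    have S0 : 0 ≤ S := by positivity
    have K0 : 0 ≤ K := by positivity
    have T0 : 0 ≤ T := by positivity
    have a1 := mul_nonneg hp.le S0
    have a2 := mul_nonneg hq.le K0
    have a3 := mul_nonneg ht.le T0
    have Sz : S = 0 := (mul_eq_zero.1 (by linarith : (γ + β) * S = 0)).resolve_left hp.ne.symm
    have Kz : K = 0 := (mul_eq_zero.1 (by linarith : (γ - β) * K = 0)).resolve_left hq.ne.symm
    have Tz : T = 0 := (mul_eq_zero.1 (by linarith : (3*α + γ + β) * T = 0)).resolve_left ht.ne.symm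
    have key : A 0 0 ^ 2 + A 0 1 ^ 2 + A 0 2 ^ 2 + A 1 0 ^ 2 + A 1 1 ^ 2 + A 1 2 ^ 2
        + A 2 0 ^ 2 + A 2 1 ^ 2 + A 2 2 ^ 2 = 0 := by
      have : A 0 0 ^ 2 + A 0 1 ^ 2 + A 0 2 ^ 2 + A 1 0 ^ 2 + A 1 1 ^ 2 + A 1 2 ^ 2
        + A 2 0 ^ 2 + A 2 1 ^ 2 + A 2 2 ^ 2 = S + K + T := by
        rw [hS, hK, hT]; ring
      rw [this, Sz, Kz, Tz]; norm_num
    ext i j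
    have : A i j ^ 2 ≤ 0 := by
      fin_cases i <;> fin_cases j <;> simp only [Fin.zero_eta, Fin.mk_one, Fin.reduceFinMk] <;>
      linarith [sq_nonneg (A 0 0), sq_nonneg (A 0 1), sq_nonneg (A 0 2), sq_nonneg (A 1 0),
        sq_nonneg (A 1 1), sq_nonneg (A 1 2), sq_nonneg (A 2 0), sq_nonneg (A 2 1),
        sq_nonneg (A 2 2)]
    simpa using pow_eq_zero_iff (two_ne_zero) |>.1 (le_antisymm this (sq_nonneg _))
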